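/- The subgroup G_V of GL(5,ℝ) generated by the four Minkowski reflections r_{i₀}, r_{i₁}, r_{i₂}, r_t is isomorphic to the symmetric group S₅; in particular it is finite of order 120. -/

import Mathlib

noncomputable section

open Real

/-- The Minkowski bilinear form of signature (1,4) on `ℝ^5`. -/
def B (x y : Fin 5 → ℝ) : ℝ :=
  -(x 0 * y 0) + x 1 * y 1 + x 2 * y 2 + x 3 * y 3 + x 4 * y 4

/-- The Kerckhoff–Storm vector `t`. -/
def vt : Fin 5 → ℝ := ![Real.sqrt 2, 1, 1, 1, Real.sqrt 7]
/-- The Kerckhoff–Storm vector `b`. -/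
def vb : Fin 5 → ℝ := ![Real.sqrt 2, 1, 1, -1, -Real.sqrt 7]
/-- The Kerckhoff–Storm vector `u`. -/
def vu : Fin 5 → ℝ := ![Real.sqrt 2, 1, 1, 1, -(Real.sqrt 7 / 7)]
/-- The Kerckhoff–Storm vector `ℓ`. -/
def vl : Fin 5 → ℝ := ![Real.sqrt 2, 1, 1, -1, Real.sqrt 7 / 7]
/-- The Kerckhoff–Storm vector `c`. -/
def vc : Fin 5 → ℝ := ![1, Real.sqrt 2, 0, 0, 0]
/-- The Kerckhoff–Storm vector `i₀`. -/
def vi0 : Fin 5 → ℝ := ![0, -1, 1, 0, 0]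
/-- The Kerckhoff–Storm vector `i₁`. -/
def vi1 : Fin 5 → ℝ := ![0, 0, -1, -1, 0]
/-- The Kerckhoff–Storm vector `i₂`. -/
def vi2 : Fin 5 → ℝ := ![0, 0, -1, 1, 0]

/-- The Minkowski reflection along a vector `v` with `B v v ≠ 0`. -/
def mrefl (v : Fin 5 → ℝ) (x : Fin 5 → ℝ) : Fin 5 → ℝ :=
  x - (2 * (B x v / B v v)) • v

/-!
The four roots form a Dynkin diagram of type `A₄`, so they are proportional to the consecutive
differences `w (i + 1) - w i` of the vertices `w 0, …, w 4` of a regular simplex. The reflection in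
a difference of two vertices exchanges these two and fixes the others. Hence, as soon as the
vertices are chosen with nonzero sum and so form a basis of `ℝ^5`, the generators are the
adjacent transpositions of that basis, which generate a faithful copy of the symmetric group.
-/

section PermuteBasis

variable {ι R M : Type*} [CommSemiring R] [AddCommMonoid M] [Module R M]

/-- The linear action of the permutations of `ι` on a module with a basis indexed by `ι`, by
permuting the basis vectors. -/
def basisPermHom (b : Module.Basis ι R M) : Equiv.Perm ι →* (M →ₗ[R] M)ˣ :=
  MonoidHom.toHomUnits
    { toFun σ := b.equiv b σ
      map_one' := b.ext fun i ↦ by simp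
      map_mul' σ τ := b.ext fun i ↦ by simp }

lemma basisPermHom_apply_basis (b : Module.Basis ι R M) (σ : Equiv.Perm ι) (i : ι) :
    (basisPermHom b σ).val (b i) = b (σ i) :=
  b.equiv_apply i b σ

lemma basisPermHom_injective [Nontrivial R] (b : Module.Basis ι R M) :
    Function.Injective (basisPermHom b) := by
  intro σ τ h
  ext i
  apply b.injective
  rw [← basisPermHom_apply_basis, h, basisPermHom_apply_basis]

lemma eq_basisPermHom {b : Module.Basis ι R M} {g : (M →ₗ[R] M)ˣ} {σ : Equiv.Perm ι}
    (hg : ∀ i, g.val (b i) = b (σ i)) : g = basisPermHom b σ :=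
  Units.ext <| b.ext fun i ↦ by rw [hg, basisPermHom_apply_basis]

lemma closure_range_swap_castSucc_succ (n : ℕ) :
    Subgroup.closure (Set.range fun i : Fin n ↦ Equiv.swap i.castSucc i.succ) = ⊤ :=
  Subgroup.closure_eq_top_of_mclosure_eq_top (Equiv.Perm.mclosure_swap_castSucc_succ n)

theorem nonempty_closure_range_mulEquiv_perm [Nontrivial R] {n : ℕ}
    (b : Module.Basis (Fin (n + 1)) R M) (g : Fin n → (M →ₗ[R] M)ˣ)
    (hg : ∀ i j, (g i).val (b j) = b (Equiv.swap i.castSucc i.succ j)) :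
    Nonempty (Subgroup.closure (Set.range g) ≃* Equiv.Perm (Fin (n + 1))) := by
  have g_eq : g = basisPermHom b ∘ fun i ↦ Equiv.swap i.castSucc i.succ :=
    funext fun i ↦ eq_basisPermHom (hg i)
  have closure_eq : Subgroup.closure (Set.range g) = (basisPermHom b).range := by
    rw [g_eq, Set.range_comp, ← MonoidHom.map_closure, closure_range_swap_castSucc_succ,
      MonoidHom.range_eq_map]
  rw [closure_eq]
  exact ⟨(MonoidHom.ofInjective (basisPermHom_injective b)).symm⟩

end PermuteBasis

section RegularSimplex

variable {ι R M : Type*} [DecidableEq ι] [CommRing R] [AddCommGroup M] [Module R M]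
  {β : LinearMap.BilinForm R M} {w : ι → M} {p q : R}

lemma linearIndependent_of_simplex_gram [Fintype ι] [NoZeroDivisors R]
    (gram : ∀ i j, β (w i) (w j) = if i = j then p else q) (hpq : p ≠ q)
    (hsum : p + (Fintype.card ι - 1) * q ≠ 0) : LinearIndependent R w := by
  rw [Fintype.linearIndependent_iff]
  intro c hc
  have pairing (j : ι) : (p - q) * c j + q * ∑ i, c i = 0 := by
    calc (p - q) * c j + q * ∑ i, c i = ∑ i, c i * (if i = j then p else q) := by
          have split (i : ι) : c i * (if i = j then p else q) =
              (if i = j then (p - q) * c i else 0) + q * c i := by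
            split_ifs <;> ring
          simp only [split, Finset.sum_add_distrib, Finset.sum_ite_eq', Finset.mem_univ, if_true,
            Finset.mul_sum]
      _ = β (∑ i, c i • w i) (w j) := by
          simp only [map_sum, map_smul, LinearMap.sum_apply, LinearMap.smul_apply, smul_eq_mul,
            gram]
      _ = 0 := by rw [hc, map_zero, LinearMap.zero_apply]
  have sum_eq_zero : ∑ i, c i = 0 := by
    have total : ∑ j, ((p - q) * c j + q * ∑ i, c i) = 0 :=
      Finset.sum_eq_zero fun j _ ↦ pairing j
    rw [Finset.sum_add_distrib, ← Finset.mul_sum, Finset.sum_const, Finset.card_univ,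
      nsmul_eq_mul] at total
    refine (mul_eq_zero.mp ?_).resolve_left hsum
    linear_combination total
  intro j
  refine (mul_eq_zero.mp ?_).resolve_left (sub_ne_zero.mpr hpq)
  simpa only [sum_eq_zero, mul_zero, add_zero] using pairing j

lemma apply_sub_self_of_simplex_gram (gram : ∀ i j, β (w i) (w j) = if i = j then p else q)
    {i j : ι} (hij : i ≠ j) : β (w j - w i) (w j - w i) = 2 * (p - q) := by
  simp only [map_sub, LinearMap.sub_apply, gram, if_true, if_neg hij, if_neg hij.symm]
  ring

theorem reflection_sub_apply_of_simplex_gram (gram : ∀ i j, β (w i) (w j) = if i = j then p else q)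
    {i j : ι} (h : LinearMap.IsReflective β (w j - w i)) (k : ι) :
    Module.reflection (h.coroot_apply_self β) (w k) = w (Equiv.swap i j k) := by
  obtain rfl | hij := eq_or_ne i j
  · simp [Module.reflection_apply]
  have coroot_eq : h.coroot β (w k) = (if j = k then 1 else 0) - (if i = k then 1 else 0) := by
    refine h.regular.left (?_ : β _ _ * _ = β _ _ * _)
    rw [h.apply_self_mul_coroot_apply, apply_sub_self_of_simplex_gram gram hij, map_sub,
      LinearMap.sub_apply, gram, gram]
    split_ifs <;> ring
  rw [Module.reflection_apply, coroot_eq]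
  obtain rfl | hik := eq_or_ne i k
  · simp [hij.symm]
  obtain rfl | hjk := eq_or_ne j k
  · simp [hij]
  simp [hik, hjk, Equiv.swap_apply_of_ne_of_ne hik.symm hjk.symm]

end RegularSimplex

section Minkowski

/-- The Minkowski form `B` as a bundled bilinear form. -/
def minkowskiForm : LinearMap.BilinForm ℝ (Fin 5 → ℝ) :=
  LinearMap.mk₂ ℝ B
    (fun x y z ↦ by simp only [B, Pi.add_apply]; ring)
    (fun c x y ↦ by simp only [B, Pi.smul_apply, smul_eq_mul]; ring)
    (fun x y z ↦ by simp only [B, Pi.add_apply]; ring)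
    (fun c x y ↦ by simp only [B, Pi.smul_apply, smul_eq_mul]; ring)

lemma minkowskiForm_apply (x y : Fin 5 → ℝ) : minkowskiForm x y = B x y := rfl

lemma B_comm (x y : Fin 5 → ℝ) : B x y = B y x := by
  simp only [B]
  ring

lemma mrefl_eq_reflection {v : Fin 5 → ℝ} (hv : LinearMap.IsReflective minkowskiForm v)
    (x : Fin 5 → ℝ) : mrefl v x = Module.reflection (hv.coroot_apply_self minkowskiForm) x := by
  have coroot_eq : hv.coroot minkowskiForm x = 2 * (B x v / B v v) := by
    have hvv : B v v ≠ 0 := hv.regular.ne_zero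
    have h := hv.apply_self_mul_coroot_apply minkowskiForm (y := x)
    rw [minkowskiForm_apply, minkowskiForm_apply, B_comm v x] at h
    field_simp
    linarith
  rw [mrefl, Module.reflection_apply, coroot_eq]

lemma mrefl_smul {c : ℝ} (hc : c ≠ 0) (v : Fin 5 → ℝ) : mrefl (c • v) = mrefl v := by
  funext x
  simp only [mrefl, ← minkowskiForm_apply, map_smul, LinearMap.smul_apply, smul_smul, smul_eq_mul]
  congr 2
  field_simp

/-- The vertices of a regular simplex whose consecutive differences are multiples of
`i₂, i₀, i₁, t`. These differences determine the simplex up to translation along the line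
orthogonal to the roots (the line of the vertex `V`); the translate chosen here makes the Gram
matrix integral and the vertices linearly independent. -/
def simplexVertex : Fin 5 → Fin 5 → ℝ :=
  ![![√2, 2, 2, -2, 0],
    ![√2, 2, -2, 2, 0],
    ![√2, -2, 2, 2, 0],
    ![√2, -2, -2, -2, 0],
    ![3 * √2, 0, 0, 0, 2 * √7]]

/-- The vectors `i₂, i₀, i₁, t`, in their order along the Dynkin diagram `A₄`. -/
def simpleRoot : Fin 4 → Fin 5 → ℝ := ![vi2, vi0, vi1, vt]

lemma minkowskiForm_simplexVertex (i j : Fin 5) :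
    minkowskiForm (simplexVertex i) (simplexVertex j) = if i = j then 10 else -6 := by
  have sq_two : √2 * √2 = 2 := Real.mul_self_sqrt (by norm_num)
  have sq_seven : √7 * √7 = 7 := Real.mul_self_sqrt (by norm_num)
  rw [minkowskiForm_apply]
  fin_cases i <;> fin_cases j <;> simp [B, simplexVertex] <;> linarith

/-- The vertices `simplexVertex` as a basis of `ℝ^5`. -/
def simplexBasis : Module.Basis (Fin 5) ℝ (Fin 5 → ℝ) :=
  basisOfLinearIndependentOfCardEqFinrank
    (linearIndependent_of_simplex_gram minkowskiForm_simplexVertex (by norm_num) (by norm_num))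
    (by simp)

lemma simplexBasis_apply (i : Fin 5) : simplexBasis i = simplexVertex i :=
  congrFun (coe_basisOfLinearIndependentOfCardEqFinrank _ _) i

lemma simplexVertex_succ_sub_castSucc (i : Fin 4) :
    simplexVertex i.succ - simplexVertex i.castSucc =
      (![4, 4, 4, 2] i : ℝ) • simpleRoot i := by
  fin_cases i <;> ext k <;> fin_cases k <;>
    simp [simplexVertex, simpleRoot, vi0, vi1, vi2, vt] <;> ring

lemma isReflective_simplexVertex_sub {i j : Fin 5} (hij : i ≠ j) :
    LinearMap.IsReflective minkowskiForm (simplexVertex j - simplexVertex i) := by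
  have norm_ne_zero : minkowskiForm (simplexVertex j - simplexVertex i)
      (simplexVertex j - simplexVertex i) ≠ 0 := by
    rw [apply_sub_self_of_simplex_gram minkowskiForm_simplexVertex hij]
    norm_num
  exact ⟨.of_ne_zero norm_ne_zero, fun y ↦ norm_ne_zero.isUnit.dvd⟩

theorem mrefl_simpleRoot_simplexVertex (i : Fin 4) (k : Fin 5) :
    mrefl (simpleRoot i) (simplexVertex k) =
      simplexVertex (Equiv.swap i.castSucc i.succ k) := by
  have scale_ne_zero : (![4, 4, 4, 2] i : ℝ) ≠ 0 := by
    fin_cases i <;> simp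
  rw [← mrefl_smul scale_ne_zero, ← simplexVertex_succ_sub_castSucc,
    mrefl_eq_reflection (isReflective_simplexVertex_sub i.castSucc_lt_succ.ne),
    reflection_sub_apply_of_simplex_gram minkowskiForm_simplexVertex]

end Minkowski

/-- The subgroup of `GL(5,ℝ)` generated by the Minkowski reflections
`r_{i₀}, r_{i₁}, r_{i₂}, r_t` is isomorphic to the symmetric group `S₅`;
in particular it is finite of order 120. -/
theorem subgroup_GV_iso_S5 (g₀ g₁ g₂ gt : ((Fin 5 → ℝ) →ₗ[ℝ] (Fin 5 → ℝ))ˣ)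
    (h₀ : ∀ x, g₀.val x = mrefl vi0 x)
    (h₁ : ∀ x, g₁.val x = mrefl vi1 x)
    (h₂ : ∀ x, g₂.val x = mrefl vi2 x)
    (ht : ∀ x, gt.val x = mrefl vt x) :
    Nonempty ((Subgroup.closure {g₀, g₁, g₂, gt} :
        Subgroup ((Fin 5 → ℝ) →ₗ[ℝ] (Fin 5 → ℝ))ˣ) ≃* Equiv.Perm (Fin 5)) ∧
      Nat.card (Subgroup.closure {g₀, g₁, g₂, gt} :
        Subgroup ((Fin 5 → ℝ) →ₗ[ℝ] (Fin 5 → ℝ))ˣ) = 120 := by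
  have range_gen : Set.range ![g₂, g₀, g₁, gt] = {g₀, g₁, g₂, gt} := by
    ext g
    simp only [Matrix.range_cons, Matrix.range_empty, Set.union_empty, Set.mem_union,
      Set.mem_singleton_iff, Set.mem_insert_iff]
    tauto
  have gen_apply (i : Fin 4) (x : Fin 5 → ℝ) :
      (![g₂, g₀, g₁, gt] i).val x = mrefl (simpleRoot i) x := by
    fin_cases i
    exacts [h₂ x, h₀ x, h₁ x, ht x]
  obtain ⟨e⟩ := nonempty_closure_range_mulEquiv_perm simplexBasis ![g₂, g₀, g₁, gt] fun i j ↦ by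
    rw [gen_apply, simplexBasis_apply, simplexBasis_apply, mrefl_simpleRoot_simplexVertex]
  rw [range_gen] at e
  exact ⟨⟨e⟩, by rw [Nat.card_congr e.toEquiv, Nat.card_perm, Nat.card_fin]; rfl⟩
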